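/- Let A be a regular (commutative Noetherian) ring and M a finitely generated A-module. For every i ≥ 0, every prime P in the support of Ext^i_A(M, A) satisfies dim A_P ≥ i; equivalently, the support of Ext^i_A(M, A) has codimension at least i in Spec A. -/

import Mathlib

open CategoryTheory

/-- A Noetherian local ring is *regular* if its Krull dimension equals its embedding
dimension, i.e. the dimension of the cotangent space `m/m²` over the residue field. -/
def IsRegularLocal (R : Type) [CommRing R] [IsLocalRing R] : Prop :=
  ringKrullDim R =
    (Module.finrank (IsLocalRing.ResidueField R) (IsLocalRing.CotangentSpace R) : WithBot ℕ∞)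

/-!
Localize at `p` and suppose `dim A_p ≤ n`. A regular local ring `R` satisfies `pd M ≤ dim R` for
every finitely generated `M`: by prime avoidance some `x ∈ m \ m ^ 2` lies outside the minimal
primes, `R / (x)` is regular of dimension one less, hence a domain by induction, which makes `R` a
domain and `x` a nonzerodivisor. A first syzygy `K` of `M` has no `x`-torsion, so that
`pd K ≤ pd (K / xK)`. It follows that `pd M_p ≤ n`. The surjection from a projective module onto an
`n`-th syzygy of `M` therefore splits after localization, so over `A` some `s ∉ p` times the
identity factors through it, and this `s` kills `Ext^{n+1}(M, N)`.
-/

universe u v w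

section RegularLocalRing

open IsLocalRing

theorem isLocalRing_quotient_span_singleton {R : Type u} [CommRing R] [IsLocalRing R] {x : R}
    (hx : x ∈ maximalIdeal R) : IsLocalRing (R ⧸ Ideal.span {x}) :=
  have : Nontrivial (R ⧸ Ideal.span {x}) :=
    Ideal.Quotient.nontrivial_iff.mpr (by rwa [Ne, Ideal.span_singleton_eq_top])
  .of_surjective' (Ideal.Quotient.mk _) Ideal.Quotient.mk_surjective

variable {R : Type u} [CommRing R]

theorem exists_span_insert_eq_maximalIdeal [IsLocalRing R] [IsNoetherianRing R] {x : R}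
    (hx : x ∈ maximalIdeal R) (hx2 : x ∉ maximalIdeal R ^ 2) :
    ∃ s : Set R, s.Finite ∧ s.ncard + 1 = (maximalIdeal R).spanFinrank ∧
      Ideal.span (insert x s) = maximalIdeal R := by
  set v : CotangentSpace R := (maximalIdeal R).toCotangent ⟨x, hx⟩ with hv
  have hv0 : v ≠ 0 := by rwa [hv, Ne, Ideal.toCotangent_eq_zero]
  have hli : LinearIndepOn (ResidueField R) id {v} := LinearIndepOn.singleton hv0
  set B : Set (CotangentSpace R) := hli.extend (Set.subset_univ _)
  have hvB : v ∈ B := hli.subset_extend _ rfl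
  have hB : B.Finite := Module.Finite.finite_basis (Module.Basis.extend hli)
  obtain ⟨lift, hlift⟩ := (maximalIdeal R).toCotangent_surjective.hasRightInverse
  have hcard : (B \ {v}).ncard + 1 = (maximalIdeal R).spanFinrank := by
    rw [Set.ncard_sdiff_singleton_add_one hvB hB, ← Nat.card_coe_set_eq,
      spanFinrank_maximalIdeal_eq_finrank_cotangentSpace,
      Module.finrank_eq_nat_card_basis (Module.Basis.extend hli)]
  have himage : (maximalIdeal R).toCotangent '' insert ⟨x, hx⟩ (lift '' (B \ {v})) = B := by
    rw [Set.image_insert_eq, ← hv, hlift.image_image, Set.insert_sdiff_self_of_mem hvB]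
  have hspan : Submodule.span R (insert ⟨x, hx⟩ (lift '' (B \ {v}))) = ⊤ := by
    rw [← CotangentSpace.span_image_eq_top_iff, himage, ← (Module.Basis.extend hli).span_eq,
      Module.Basis.range_extend]
  refine ⟨Subtype.val '' (lift '' (B \ {v})), (hB.sdiff.image _).image _, ?_, ?_⟩
  · rw [Set.ncard_image_of_injective _ Subtype.val_injective,
      Set.ncard_image_of_injective _ hlift.injective, hcard]
  · have hmap := congrArg (Submodule.map (maximalIdeal R).subtype) hspan
    rwa [Submodule.map_top, Submodule.range_subtype, Submodule.map_span, Submodule.coe_subtype,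
      Set.image_insert_eq] at hmap

theorem spanFinrank_maximalIdeal_quotient_span_singleton_add_one_le [IsLocalRing R]
    [IsNoetherianRing R] {x : R} (hx : x ∈ maximalIdeal R) (hx2 : x ∉ maximalIdeal R ^ 2)
    [IsLocalRing (R ⧸ Ideal.span {x})] :
    (maximalIdeal (R ⧸ Ideal.span {x})).spanFinrank + 1 ≤ (maximalIdeal R).spanFinrank := by
  obtain ⟨s, hs, hcard, hspan⟩ := exists_span_insert_eq_maximalIdeal hx hx2
  have hx0 : Ideal.Quotient.mk (Ideal.span {x}) x = 0 :=
    Ideal.Quotient.eq_zero_iff_mem.mpr (Ideal.mem_span_singleton_self x)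
  have hmax : maximalIdeal (R ⧸ Ideal.span {x}) =
      Ideal.span (Ideal.Quotient.mk (Ideal.span {x}) '' s) := by
    rw [← map_maximalIdeal_of_surjective _ Ideal.Quotient.mk_surjective, ← hspan, Ideal.map_span,
      Set.image_insert_eq, hx0, Ideal.span_insert_zero]
  rw [hmax, ← hcard]
  gcongr
  exact (Submodule.spanFinrank_span_le_ncard_of_finite (hs.image _)).trans
    (Set.ncard_image_le hs)

theorem isRegularLocalRing_quotient_span_singleton [IsRegularLocalRing R] {x : R}
    (hx : x ∈ maximalIdeal R) (hx2 : x ∉ maximalIdeal R ^ 2) :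
    IsRegularLocalRing (R ⧸ Ideal.span {x}) := by
  have := isLocalRing_quotient_span_singleton hx
  refine .of_spanFinrank_maximalIdeal_le _ (ENat.WithBot.add_le_add_one_right_iff.mp ?_)
  calc ((maximalIdeal (R ⧸ Ideal.span {x})).spanFinrank + 1 : WithBot ℕ∞)
      ≤ (maximalIdeal R).spanFinrank := by
        exact_mod_cast spanFinrank_maximalIdeal_quotient_span_singleton_add_one_le hx hx2
    _ = ringKrullDim R := IsRegularLocalRing.spanFinrank_maximalIdeal
    _ = (maximalIdeal R).height := maximalIdeal_height_eq_ringKrullDim.symm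
    _ ≤ ringKrullDim (R ⧸ Ideal.span {x}) + 1 := Ideal.height_le_ringKrullDim_quotient_add_one hx

theorem ringKrullDim_quotient_span_singleton_add_one_le [IsRegularLocalRing R] {x : R}
    (hx : x ∈ maximalIdeal R) (hx2 : x ∉ maximalIdeal R ^ 2) :
    ringKrullDim (R ⧸ Ideal.span {x}) + 1 ≤ ringKrullDim R := by
  have := isRegularLocalRing_quotient_span_singleton hx hx2
  rw [← IsRegularLocalRing.spanFinrank_maximalIdeal (R := R),
    ← IsRegularLocalRing.spanFinrank_maximalIdeal (R := R ⧸ Ideal.span {x})]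
  exact_mod_cast spanFinrank_maximalIdeal_quotient_span_singleton_add_one_le hx hx2

theorem exists_mem_maximalIdeal_notMem_sq_notMem_minimalPrimes [IsLocalRing R]
    [IsNoetherianRing R] (hdim : ringKrullDim R ≠ 0) :
    ∃ x ∈ maximalIdeal R, x ∉ maximalIdeal R ^ 2 ∧ ∀ q ∈ minimalPrimes R, x ∉ q := by
  have hfin : (minimalPrimes R).Finite := minimalPrimes.finite_of_isNoetherianRing R
  have hsq : ¬ maximalIdeal R ≤ maximalIdeal R ^ 2 :=
    (maximalIdeal_sq_lt_of_ringKrullDim_ne_zero hdim).not_ge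
  have hmin : ∀ q ∈ minimalPrimes R, ¬ maximalIdeal R ≤ q := by
    intro q hq hle
    obtain rfl : maximalIdeal R = q := hle.antisymm (le_maximalIdeal hq.1.1.ne_top)
    exact hdim (by rw [← maximalIdeal_height_eq_ringKrullDim, Ideal.height_eq_zero_iff.mpr hq]; rfl)
  have hcover := (Ideal.subset_union_prime (s := insert (maximalIdeal R ^ 2) hfin.toFinset)
    (f := id) (maximalIdeal R ^ 2) (maximalIdeal R ^ 2)
    (fun q hq hne _ => (hfin.mem_toFinset.mp (Finset.mem_of_mem_insert_of_ne hq hne)).1.1)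
    (I := maximalIdeal R)).not.mpr (by simpa [hsq] using hmin)
  simpa [Set.not_subset] using hcover

theorem isField_iff_ringKrullDim_eq_zero [IsRegularLocalRing R] :
    IsField R ↔ ringKrullDim R = 0 := by
  rw [isField_iff_maximalIdeal_eq, ← IsRegularLocalRing.spanFinrank_maximalIdeal,
    Nat.cast_eq_zero, Submodule.spanFinrank_eq_zero_iff_eq_bot (IsNoetherian.noetherian _)]

theorem exists_isRegularLocalRing_quotient_span_singleton [IsRegularLocalRing R]
    (hR : ¬ IsField R) :
    ∃ x ∈ maximalIdeal R, (∀ q ∈ minimalPrimes R, x ∉ q) ∧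
      IsRegularLocalRing (R ⧸ Ideal.span {x}) ∧
      ringKrullDim (R ⧸ Ideal.span {x}) + 1 ≤ ringKrullDim R := by
  obtain ⟨x, hx, hx2, hmin⟩ := exists_mem_maximalIdeal_notMem_sq_notMem_minimalPrimes
    (isField_iff_ringKrullDim_eq_zero.not.mp hR)
  exact ⟨x, hx, hmin, isRegularLocalRing_quotient_span_singleton hx hx2,
    ringKrullDim_quotient_span_singleton_add_one_le hx hx2⟩

theorem isDomain_of_isPrime_span_singleton [IsLocalRing R] [IsNoetherianRing R] {x : R}
    (hx : x ∈ maximalIdeal R) (hmin : ∀ q ∈ minimalPrimes R, x ∉ q)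
    (hprime : (Ideal.span {x}).IsPrime) : IsDomain R := by
  obtain ⟨q, hq, hle⟩ := Ideal.exists_minimalPrimes_le (bot_le : ⊥ ≤ Ideal.span {x})
  have hqprime : q.IsPrime := hq.1.1
  have hqmul : q ≤ maximalIdeal R • q := by
    intro y hy
    obtain ⟨z, rfl⟩ := Ideal.mem_span_singleton'.mp (hle hy)
    have hz : z ∈ q := (hqprime.mem_or_mem hy).resolve_right (hmin q hq)
    exact mul_comm x z ▸ Submodule.smul_mem_smul hx hz
  have hqbot : q = ⊥ := Submodule.eq_bot_of_le_smul_of_le_jacobson_bot _ q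
    (IsNoetherian.noetherian q) hqmul (maximalIdeal_le_jacobson ⊥)
  subst hqbot
  exact .of_bot_isPrime R

theorem isRegularLocalRing_induction {motive : ∀ (R : Type u) [CommRing R], Prop}
    (field : ∀ (R : Type u) [CommRing R], IsField R → motive R)
    (quotient : ∀ (R : Type u) [CommRing R] [IsRegularLocalRing R] (x : R)
      [IsRegularLocalRing (R ⧸ Ideal.span {x})],
      x ∈ maximalIdeal R → (∀ q ∈ minimalPrimes R, x ∉ q) →
      ringKrullDim (R ⧸ Ideal.span {x}) + 1 ≤ ringKrullDim R → motive (R ⧸ Ideal.span {x}) →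
      motive R)
    (R : Type u) [CommRing R] [IsRegularLocalRing R] : motive R := by
  obtain ⟨n, hn⟩ : ∃ n : ℕ, ringKrullDim R ≤ n :=
    ⟨_, IsRegularLocalRing.spanFinrank_maximalIdeal.ge⟩
  induction n generalizing R with
  | zero =>
    exact field R (isField_iff_ringKrullDim_eq_zero.mpr
      (hn.antisymm ringKrullDim_nonneg_of_nontrivial))
  | succ n ih =>
    by_cases hR : IsField R
    · exact field R hR
    obtain ⟨x, hx, hmin, hreg, hdim⟩ := exists_isRegularLocalRing_quotient_span_singleton hR
    exact quotient R x hx hmin hdim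
      (ih _ (ENat.WithBot.add_le_add_one_right_iff.mp (hdim.trans (by exact_mod_cast hn))))

theorem isDomain_of_isRegularLocalRing (R : Type u) [CommRing R] [IsRegularLocalRing R] :
    IsDomain R := by
  refine isRegularLocalRing_induction (motive := fun R _ => IsDomain R)
    (fun R _ hR => hR.isDomain) (fun R _ _ x _ hx hmin _ hdomain => ?_) R
  exact isDomain_of_isPrime_span_singleton hx hmin
    ((Ideal.Quotient.isDomain_iff_prime _).mp hdomain)

end RegularLocalRing

section ReductionModulo

open IsLocalRing

variable {R : Type u} [CommRing R]

/-- Reduction modulo `x`, the functor `M ↦ M / xM` from `R`-modules to `R / (x)`-modules. -/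
def quotSMulTopFunctor (x : R) : ModuleCat.{v} R ⥤ ModuleCat.{v} (R ⧸ Ideal.span {x}) where
  obj M := .of _ (QuotSMulTop x M)
  map f := ModuleCat.ofHom
    ((QuotSMulTop.map x f.hom).extendScalarsOfSurjective Ideal.Quotient.mk_surjective)
  map_id M := ModuleCat.hom_ext <| LinearMap.ext fun m =>
    LinearMap.congr_fun (QuotSMulTop.map_id x M) m
  map_comp f g := ModuleCat.hom_ext <| LinearMap.ext fun m =>
    LinearMap.congr_fun (QuotSMulTop.map_comp x g.hom f.hom) m

instance (x : R) : (quotSMulTopFunctor.{u, v} x).Additive where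
  map_add {_ _ f g} := ModuleCat.hom_ext <| LinearMap.ext fun m =>
    LinearMap.congr_fun ((QuotSMulTop.map x).map_add f.hom g.hom) m

theorem shortExact_map_quotSMulTopFunctor {x : R} {S : ShortComplex (ModuleCat.{v} R)}
    (hS : S.ShortExact) (hx : IsSMulRegular S.X₃ x) :
    (S.map (quotSMulTopFunctor x)).ShortExact := by
  have hf : Function.Injective S.f.hom := (ModuleCat.mono_iff_injective _).mp hS.mono_f
  have hg : Function.Surjective S.g.hom := (ModuleCat.epi_iff_surjective _).mp hS.epi_g
  have hfg : Function.Exact S.f.hom S.g.hom :=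
    (ShortComplex.ShortExact.moduleCat_exact_iff_function_exact S).mp hS.exact
  have hinj : Function.Injective (QuotSMulTop.map x S.f.hom) := by
    have hzero : Function.Exact (0 : S.X₁ →ₗ[R] S.X₁) S.f.hom :=
      (LinearMap.exact_zero_iff_injective _ _).mpr hf
    have hexact := QuotSMulTop.map_first_exact_on_four_term_exact_of_isSMulRegular_last
      hzero hfg hx
    rw [map_zero] at hexact
    exact (LinearMap.exact_zero_iff_injective _ _).mp hexact
  exact {
    exact := ModuleCat.shortComplex_exact _ (QuotSMulTop.map_exact x hfg hg)
    mono_f := (ModuleCat.mono_iff_injective _).mpr hinj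
    epi_g := (ModuleCat.epi_iff_surjective _).mpr (QuotSMulTop.map_surjective x hg) }

theorem hasProjectiveDimensionLE_of_quotSMulTop [Small.{v} R] [IsLocalRing R] [IsNoetherianRing R]
    {x : R} (hx : x ∈ maximalIdeal R) (hreg : IsRegular x) (n : ℕ) (M : ModuleCat.{v} R)
    [Module.Finite R M] (hM : IsSMulRegular M x)
    (hpd : HasProjectiveDimensionLE ((quotSMulTopFunctor x).obj M) n) :
    HasProjectiveDimensionLE M n := by
  induction n generalizing M with
  | zero =>
    rw [← projective_iff_hasProjectiveDimensionLE_zero, ← IsProjective.iff_projective] at hpd ⊢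
    change Module.Projective (R ⧸ Ideal.span {x}) (QuotSMulTop x M) at hpd
    have := isLocalRing_quotient_span_singleton hx
    have := Module.finitePresentation_of_finite R M
    have := Module.Finite.of_restrictScalars_finite R (R ⧸ Ideal.span {x}) (QuotSMulTop x M)
    have hfree : Module.Free (R ⧸ Ideal.span {x}) (QuotSMulTop x M) :=
      Module.free_of_flat_of_isLocalRing
    have := (Module.free_quotSMulTop_iff_free R M (maximalIdeal_le_jacobson _ hx) hM).mp hfree
    exact Module.Projective.of_free
  | succ n ih =>
    obtain ⟨P, _, _, _, _, f, hf⟩ := Module.exists_finite_presentation R M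
    have hS := LinearMap.shortExact_shortComplexKer hf
    have hP : IsSMulRegular P x := Module.Flat.isSMulRegular_of_isRegular hreg
    have hproj : Projective (ModuleCat.of R P) := inferInstance
    have hprojx : Projective ((quotSMulTopFunctor x).obj (ModuleCat.of R P)) := by
      rw [← IsProjective.iff_projective]
      exact inferInstanceAs (Module.Projective (R ⧸ Ideal.span {x}) (QuotSMulTop x P))
    refine (hS.hasProjectiveDimensionLT_X₃_iff n hproj).mpr (ih _ (hP.submodule _) ?_)
    exact ((shortExact_map_quotSMulTopFunctor hS hM).hasProjectiveDimensionLT_X₃_iff n hprojx).mp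
      hpd

theorem hasProjectiveDimensionLE_succ_of_quotient_span_singleton [Small.{v} R] [IsLocalRing R]
    [IsNoetherianRing R] {x : R} (hx : x ∈ maximalIdeal R) (hreg : IsRegular x) (n : ℕ)
    (hpd : ∀ N : ModuleCat.{v} (R ⧸ Ideal.span {x}), Module.Finite (R ⧸ Ideal.span {x}) N →
      HasProjectiveDimensionLE N n)
    (M : ModuleCat.{v} R) [Module.Finite R M] : HasProjectiveDimensionLE M (n + 1) := by
  obtain ⟨P, _, _, _, _, f, hf⟩ := Module.exists_finite_presentation R M
  have hS := LinearMap.shortExact_shortComplexKer hf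
  have hker : IsSMulRegular f.ker x := (Module.Flat.isSMulRegular_of_isRegular hreg).submodule _
  refine (hS.hasProjectiveDimensionLT_X₃_iff n inferInstance).mpr
    (hasProjectiveDimensionLE_of_quotSMulTop hx hreg n _ hker (hpd _ ?_))
  exact Module.Finite.of_restrictScalars_finite R (R ⧸ Ideal.span {x}) (QuotSMulTop x f.ker)

theorem projectiveDimension_le_ringKrullDim (R : Type u) [CommRing R] [Small.{v} R]
    [IsRegularLocalRing R] (M : ModuleCat.{v} R) [Module.Finite R M] :
    projectiveDimension M ≤ ringKrullDim R := by
  refine isRegularLocalRing_induction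
    (motive := fun R _ => ∀ [Small.{v} R] (M : ModuleCat.{v} R), Module.Finite R M →
      projectiveDimension M ≤ ringKrullDim R)
    (fun R _ hR _ M _ => ?_) (fun R _ _ x _ hx hmin hdim ih _ M _ => ?_) R M inferInstance
  · let := hR.toField
    have : Projective M := (IsProjective.iff_projective M).mp Module.Projective.of_free
    calc projectiveDimension M ≤ (0 : ℕ) := (projectiveDimension_le_iff M 0).mpr inferInstance
      _ ≤ ringKrullDim R := ringKrullDim_nonneg_of_nontrivial
  · have := isDomain_of_isRegularLocalRing R
    have hx0 : x ≠ 0 := by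
      rintro rfl
      exact hmin ⊥ (by simp [IsDomain.minimalPrimes_eq_singleton_bot]) (zero_mem _)
    rw [← IsRegularLocalRing.spanFinrank_maximalIdeal (R := R ⧸ Ideal.span {x})] at ih hdim
    refine le_trans ?_ hdim
    exact_mod_cast (projectiveDimension_le_iff M _).mpr
      (hasProjectiveDimensionLE_succ_of_quotient_span_singleton hx (.of_ne_zero hx0) _
        (fun N hN => (projectiveDimension_le_iff N _).mp (ih N hN)) M)

end ReductionModulo

section ExtLocalization

theorem exists_comp_eq_smul_id_of_isLocalizedModule {A M F M' F' : Type*} [CommRing A]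
    [AddCommGroup M] [AddCommGroup F] [AddCommGroup M'] [AddCommGroup F'] [Module A M]
    [Module A F] [Module A M'] [Module A F'] (S : Submonoid A) (ι : M →ₗ[A] M') (κ : F →ₗ[A] F')
    [IsLocalizedModule S ι] [IsLocalizedModule S κ] [Module.FinitePresentation A M]
    (f : F →ₗ[A] M) (σ : M' →ₗ[A] F')
    (hσ : IsLocalizedModule.map S κ ι f ∘ₗ σ = LinearMap.id) :
    ∃ s ∈ S, ∃ h : M →ₗ[A] F, f ∘ₗ h = s • LinearMap.id := by
  obtain ⟨h, s, hs⟩ := Module.FinitePresentation.exists_lift_of_isLocalizedModule S κ (σ ∘ₗ ι)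
  have hcomp : ι ∘ₗ f ∘ₗ h = ι ∘ₗ (s • LinearMap.id) := by
    calc ι ∘ₗ f ∘ₗ h = IsLocalizedModule.map S κ ι f ∘ₗ κ ∘ₗ h := by
          rw [← LinearMap.comp_assoc, ← LinearMap.comp_assoc, IsLocalizedModule.map_comp]
      _ = s • (IsLocalizedModule.map S κ ι f ∘ₗ σ) ∘ₗ ι := by
          rw [hs, LinearMap.comp_smul, LinearMap.comp_assoc]
      _ = ι ∘ₗ (s • LinearMap.id) := by rw [hσ, LinearMap.comp_smul]; rfl
  obtain ⟨t, ht⟩ := Module.Finite.exists_smul_of_comp_eq_of_isLocalizedModule S ι _ _ hcomp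
  refine ⟨t * s, (t * s).2, t • h, ?_⟩
  rw [LinearMap.comp_smul, ht, smul_smul]
  rfl

theorem smul_ext_eq_zero_of_comp_eq_smul_id {R : Type*} [Ring R] {C : Type*} [Category* C]
    [Abelian C] [Linear R C] [HasExt.{w} C] {X P Y : C} [Projective P] {r : R} {h : X ⟶ P}
    {f : P ⟶ X} (hf : h ≫ f = r • 𝟙 X) {n : ℕ} (e : Abelian.Ext X Y (n + 1)) : r • e = 0 := by
  have hzero : (Abelian.Ext.mk₀ f).comp e (zero_add _) = 0 := Abelian.Ext.eq_zero_of_projective _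
  calc r • e = (Abelian.Ext.mk₀ (r • 𝟙 X)).comp e (zero_add _) := by
        rw [Abelian.Ext.mk₀_smul, Abelian.Ext.smul_comp, Abelian.Ext.mk₀_id_comp]
    _ = (Abelian.Ext.mk₀ h).comp ((Abelian.Ext.mk₀ f).comp e (zero_add _)) (zero_add _) := by
        rw [← hf, Abelian.Ext.mk₀_comp_mk₀_assoc]
    _ = 0 := by rw [hzero, Abelian.Ext.comp_zero]

variable {A : Type u} [CommRing A] [Small.{v} A] (S : Submonoid A)

theorem exists_comp_eq_smul_id_of_projective_localizedModule {M P : ModuleCat.{v} A}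
    [Module.FinitePresentation A M] (hM : Projective (M.localizedModule S)) (f : P ⟶ M) [Epi f] :
    ∃ s ∈ S, ∃ h : M ⟶ P, h ≫ f = s • 𝟙 M := by
  let L := ModuleCat.localizedModuleFunctor.{v} S
  have : Epi (L.map f) := inferInstance
  have : Projective (L.obj M) := hM
  have hsplit : ∃ σ : L.obj M ⟶ L.obj P, σ ≫ L.map f = 𝟙 (L.obj M) :=
    ⟨Projective.factorThru _ _, Projective.factorThru_comp _ _⟩
  obtain ⟨σ, hσ⟩ : ∃ σ : M.localizedModule S ⟶ P.localizedModule S,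
    σ ≫ ModuleCat.localizedModuleMap S f = 𝟙 _ := hsplit
  obtain ⟨s, hs, h, hh⟩ := exists_comp_eq_smul_id_of_isLocalizedModule S
    (M.localizedModuleMkLinearMap S) (P.localizedModuleMkLinearMap S) f.hom
    (σ.hom.restrictScalars A) (LinearMap.ext fun m => congrArg (fun φ => φ.hom m) hσ)
  exact ⟨s, hs, ModuleCat.ofHom h, ModuleCat.hom_ext hh⟩

theorem exists_forall_smul_ext_eq_zero [IsNoetherianRing A] (n : ℕ) (M : ModuleCat.{v} A)
    [Module.Finite A M] (hpd : HasProjectiveDimensionLE (M.localizedModule S) n) :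
    ∃ s ∈ S, ∀ (N : ModuleCat.{v} A) (e : Abelian.Ext M N (n + 1)), s • e = 0 := by
  induction n generalizing M with
  | zero =>
    have := Module.finitePresentation_of_finite A M
    obtain ⟨s, hs, h, hh⟩ := exists_comp_eq_smul_id_of_projective_localizedModule S
      (projective_iff_hasProjectiveDimensionLT_one.mpr hpd) (Projective.π M)
    exact ⟨s, hs, fun N => smul_ext_eq_zero_of_comp_eq_smul_id hh⟩
  | succ n ih =>
    obtain ⟨P, _, _, _, _, f, hf⟩ := Module.exists_finite_presentation A M
    have hT : f.shortComplexKer.ShortExact := LinearMap.shortExact_shortComplexKer hf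
    have hP : Projective f.shortComplexKer.X₂ := inferInstanceAs (Projective (ModuleCat.of A P))
    have hpdker : HasProjectiveDimensionLE (f.shortComplexKer.X₁.localizedModule S) n :=
      ((hT.map_of_exact (ModuleCat.localizedModuleFunctor S)).hasProjectiveDimensionLT_X₃_iff n
        ((ModuleCat.localizedModuleFunctor S).projective_obj _)).mp hpd
    have : Module.Finite A f.shortComplexKer.X₁ := inferInstanceAs (Module.Finite A f.ker)
    obtain ⟨s, hs, hann⟩ := ih f.shortComplexKer.X₁ hpdker
    refine ⟨s, hs, fun N e => ?_⟩
    obtain ⟨e, rfl⟩ := precomp_extClass_surjective_of_projective_X₂ N hT (n + 1) e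
    change s • hT.extClass.comp e (add_comm 1 (n + 1)) = 0
    rw [← Abelian.Ext.comp_smul, hann, Abelian.Ext.comp_zero]

theorem notMem_support_ext [IsNoetherianRing A] (p : PrimeSpectrum A) (n : ℕ)
    (M N : ModuleCat.{v} A) [Module.Finite A M]
    (hpd : HasProjectiveDimensionLE (M.localizedModule p.asIdeal.primeCompl) n) :
    p ∉ Module.support A (Abelian.Ext M N (n + 1)) := by
  obtain ⟨s, hs, hann⟩ := exists_forall_smul_ext_eq_zero p.asIdeal.primeCompl n M hpd
  exact Module.notMem_support_iff'.mpr fun e => ⟨s, hs, hann N e⟩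

end ExtLocalization

section ExtComparison

variable (R : Type*) [Ring R] {C : Type*} [Category* C] [Abelian C] [Linear R C] {X : C}

/-- The cohomology of `Hom(K, Y)` in positive degrees, as cocycles modulo coboundaries. -/
noncomputable def homologyLinearYonedaObjEquiv (K : ChainComplex C ℕ) (Y : C) (n : ℕ) :
    (K.linearYonedaObj R Y).homology (n + 1) ≃ₗ[R]
      (Linear.leftComp R Y (K.d (n + 2) (n + 1))).ker ⧸
        (Linear.leftComp R Y (K.d (n + 1) n)).range.submoduleOf
          (Linear.leftComp R Y (K.d (n + 2) (n + 1))).ker :=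
  let S := (K.linearYonedaObj R Y).sc' n (n + 1) (n + 2)
  have hrange : S.moduleCatToCycles.range =
      (Linear.leftComp R Y (K.d (n + 1) n)).range.submoduleOf
        (Linear.leftComp R Y (K.d (n + 2) (n + 1))).ker :=
    LinearMap.range_codRestrict _ _ _
  (ShortComplex.homologyMapIso ((K.linearYonedaObj R Y).isoSc' n (n + 1) (n + 2) (by simp)
    (by simp)) ≪≫ S.moduleCatHomologyIso).toLinearEquiv ≪≫ₗ Submodule.quotEquivOfEq _ _ hrange

variable [HasExt.{w} C] (P : ProjectiveResolution X) (Y : C)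

/-- The map sending an `n`-cocycle of `Hom(P, Y)`, for a projective resolution `P` of `X`, to the
class it represents in `Abelian.Ext X Y n`. -/
noncomputable def cocyclesToExt (n : ℕ) :
    (Linear.leftComp R Y (P.complex.d (n + 1) n)).ker →ₗ[R] Abelian.Ext X Y n where
  toFun f := P.extMk f.1 (n + 1) rfl f.2
  map_add' f g := (P.add_extMk f.1 g.1 (n + 1) rfl f.2 g.2).symm
  map_smul' r f := by
    have h := P.extMk_comp_mk₀ f.1 (n + 1) rfl f.2 (r • 𝟙 Y)
    rw [Abelian.Ext.mk₀_smul, Abelian.Ext.comp_smul, Abelian.Ext.comp_mk₀_id] at h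
    simpa using h.symm

theorem cocyclesToExt_surjective (n : ℕ) : Function.Surjective (cocyclesToExt R P Y n) := by
  intro e
  obtain ⟨f, hf, rfl⟩ := P.extMk_surjective e (n + 1) rfl
  exact ⟨⟨f, hf⟩, rfl⟩

theorem ker_cocyclesToExt (n : ℕ) :
    (cocyclesToExt R P Y (n + 1)).ker =
      (Linear.leftComp R Y (P.complex.d (n + 1) n)).range.submoduleOf
        (Linear.leftComp R Y (P.complex.d (n + 2) (n + 1))).ker :=
  Submodule.ext fun f => P.extMk_eq_zero_iff f.1 (n + 2) rfl f.2 n rfl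

/-- The derived functor `Ext R C` and the groups `Abelian.Ext` of morphisms in the derived category
agree in positive degrees: both are the cohomology of `Hom(P, Y)` for a projective resolution `P`
of `X`. -/
noncomputable def extLinearEquivAbelianExt [EnoughProjectives C] (X Y : C) (n : ℕ) :
    ((Ext R C (n + 1)).obj (.op X)).obj Y ≃ₗ[R] Abelian.Ext X Y (n + 1) :=
  let P := projectiveResolution X
  (P.isoExt (n + 1) Y).toLinearEquiv ≪≫ₗ homologyLinearYonedaObjEquiv R P.complex Y n ≪≫ₗ
    Submodule.quotEquivOfEq _ _ (ker_cocyclesToExt R P Y n).symm ≪≫ₗ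
    LinearMap.quotKerEquivOfSurjective _ (cocyclesToExt_surjective R P Y (n + 1))

end ExtComparison

theorem ext_support_codim_general {A : Type u} [CommRing A] [IsNoetherianRing A] [Small.{v} A]
    (M N : ModuleCat.{v} A) [Module.Finite A M] (p : PrimeSpectrum A)
    [IsRegularLocalRing (Localization.AtPrime p.asIdeal)] (i : ℕ)
    (hp : p ∈ Module.support A (((Ext A (ModuleCat.{v} A) i).obj (.op M)).obj N)) :
    (i : WithBot ℕ∞) ≤ ringKrullDim (Localization.AtPrime p.asIdeal) := by
  cases i with
  | zero => exact_mod_cast ringKrullDim_nonneg_of_nontrivial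
  | succ n =>
    by_contra! hlt
    have hdim : ringKrullDim (Localization.AtPrime p.asIdeal) ≤ n :=
      ENat.WithBot.lt_add_one_iff.mp (by exact_mod_cast hlt)
    have : Small.{v} (Localization.AtPrime p.asIdeal) :=
      small_of_surjective Localization.mkHom_surjective
    have : Module.Finite (Localization.AtPrime p.asIdeal)
        (M.localizedModule p.asIdeal.primeCompl) :=
      .of_isLocalizedModule p.asIdeal.primeCompl (M.localizedModuleMkLinearMap _)
    have hpd : HasProjectiveDimensionLE (M.localizedModule p.asIdeal.primeCompl) n :=
      (projectiveDimension_le_iff _ n).mp ((projectiveDimension_le_ringKrullDim _ _).trans hdim)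
    rw [(extLinearEquivAbelianExt A M N n).support_eq] at hp
    exact notMem_support_ext p n M N hpd hp

/-- Let `A` be a regular commutative Noetherian ring and `M` a finitely generated
`A`-module.  For every `i ≥ 0`, every prime `p` in the support of `Ext^i_A(M, A)`
satisfies `dim A_p ≥ i`; i.e. the support of `Ext^i_A(M, A)` has codimension
at least `i` in `Spec A`. -/
theorem ext_support_codim
    (A : Type) [CommRing A] [IsNoetherianRing A]
    (hreg : ∀ p : PrimeSpectrum A, IsRegularLocal (Localization.AtPrime p.asIdeal))
    (M : ModuleCat A) (hM : Module.Finite A M) (i : ℕ)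
    (p : PrimeSpectrum A)
    (hp : p ∈ Module.support A
      (((Ext A (ModuleCat A) i).obj (Opposite.op M)).obj (ModuleCat.of A A))) :
    (i : WithBot ℕ∞) ≤ ringKrullDim (Localization.AtPrime p.asIdeal) := by
  have : IsNoetherianRing (Localization.AtPrime p.asIdeal) :=
    IsLocalization.isNoetherianRing p.asIdeal.primeCompl _ inferInstance
  have : IsRegularLocalRing (Localization.AtPrime p.asIdeal) :=
    (IsRegularLocalRing.iff_finrank_cotangentSpace _).mpr (hreg p).symm
  exact ext_support_codim_general M (.of A A) p i hp
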